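/- There do not exist a (closed, infinite dimensional) subspace Y of X_p and positive constants ε and α with ε < 1 such that (a) r(Y) < ∞, and (b) for every x ∈ X_p with r(x) < α there exists y ∈ Y with ‖x − y‖ < ε·‖x‖. -/

import Mathlib

open scoped ENNReal

noncomputable section

/-- The sequence space `ℓ_p` (of real sequences), for a real exponent `p`. -/
abbrev SeqP (p : ℝ) := lp (fun _ : ℕ => ℝ) (ENNReal.ofReal p)

/-- The sequence space `ℓ_2` (of real sequences). -/
abbrev Seq2 := lp (fun _ : ℕ => ℝ) 2

/-- The space `X_{p,w}`, realized as the submodule of `ℓ_p ⊕_∞ ℓ_2` consisting of the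
pairs `(x, y)` with `y n = w n * x n`.  Since the norm on the product is the maximum of
the two norms, this is exactly the completion of the finitely supported sequences under
`‖a‖ = max {|a|_p, |a|_{2,w}}`, the element with coordinates `a` being identified with
the pair `(a, w·a)`. -/
def XpwMod (p : ℝ) (w : ℕ → ℝ) : Submodule ℝ (SeqP p × Seq2) where
  carrier := {z | ∀ n, (z.2 : ℕ → ℝ) n = w n * (z.1 : ℕ → ℝ) n}
  add_mem' := by
    intro a b ha hb n
    simp only [Prod.fst_add, Prod.snd_add, lp.coeFn_add, Pi.add_apply, ha n, hb n]
    ring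
  zero_mem' := by
    intro n
    simp
  smul_mem' := by
    intro c a ha n
    simp only [Prod.smul_fst, Prod.smul_snd, lp.coeFn_smul, Pi.smul_apply, ha n,
      smul_eq_mul]
    ring

/-- The space `X_{p,w}` with its natural norm `‖a‖ = max {|a|_p, |a|_{2,w}}`. -/
def Xpw (p : ℝ) (w : ℕ → ℝ) : Type := ↥(XpwMod p w)

variable {p : ℝ} {w : ℕ → ℝ}

instance [Fact (1 ≤ ENNReal.ofReal p)] : NormedAddCommGroup (Xpw p w) :=
  inferInstanceAs (NormedAddCommGroup ↥(XpwMod p w))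

instance [Fact (1 ≤ ENNReal.ofReal p)] : NormedSpace ℝ (Xpw p w) :=
  inferInstanceAs (NormedSpace ℝ ↥(XpwMod p w))

/-- The pair of coordinates (in `ℓ_p` and in weighted `ℓ_2`) of an element of `X_{p,w}`. -/
def Xpw.pair (x : Xpw p w) : SeqP p × Seq2 := (show ↥(XpwMod p w) from x).val

/-- The underlying sequence of coordinates of an element of `X_{p,w}`. -/
def seq (x : Xpw p w) : ℕ → ℝ := (Xpw.pair x).1

/-- `|x|_p` for `x ∈ X_{p,w}`. -/
def nrmP (x : Xpw p w) : ℝ := ‖(Xpw.pair x).1‖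

/-- `|x|_2 = |x|_{2,w}` for `x ∈ X_{p,w}`. -/
def nrm2 (x : Xpw p w) : ℝ := ‖(Xpw.pair x).2‖

/-- The ratio `r(x) = |x|_2 / |x|_p`. -/
def ratio (x : Xpw p w) : ℝ := nrm2 x / nrmP x

/-- `ω(E) = ∑_{n ∈ E} w_n^{2p/(p-2)}`. -/
def omegaE (p : ℝ) (w : ℕ → ℝ) (E : Set ℕ) : ℝ :=
  ∑' n : E, w (n : ℕ) ^ (2 * p / (p - 2))

/-- The pairing `⟨x, y⟩ = ∑_n x_n y_n w_n²`. -/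
def pairW (w : ℕ → ℝ) (x y : Xpw p w) : ℝ :=
  ∑' n, seq x n * seq y n * w n ^ 2

/-- `w` is a weight sequence suitable for Rosenthal's space `X_p`: it is positive and for
every `ε > 0`, `∑_{w_n < ε} w_n^{2p/(p-2)} = ∞`. -/
def IsXpWeight (p : ℝ) (w : ℕ → ℝ) : Prop :=
  (∀ n, 0 < w n) ∧
    ∀ ε : ℝ, 0 < ε →
      (∑' n : {n : ℕ | w n < ε}, ENNReal.ofReal (w (n : ℕ) ^ (2 * p / (p - 2)))) = ⊤

theorem memℓp_indicator {q : ℝ≥0∞} (E : Set ℕ) {f : ℕ → ℝ} (hf : Memℓp f q) :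
    Memℓp (E.indicator f) q := by
  rcases ENNReal.trichotomy q with hq | hq | hq
  · subst hq
    refine memℓp_zero ((memℓp_zero_iff.mp hf).subset ?_)
    intro i hi
    simp only [Set.mem_setOf_eq] at hi ⊢
    intro h
    exact hi (by simp [Set.indicator_apply, h])
  · subst hq
    obtain ⟨C, hC⟩ := (memℓp_infty_iff.mp hf)
    refine memℓp_infty ⟨C, ?_⟩
    rintro x ⟨i, rfl⟩
    exact le_trans (norm_indicator_le_norm_self f i) (hC ⟨i, rfl⟩)
  · refine memℓp_gen (Summable.of_nonneg_of_le (fun i => ?_) (fun i => ?_)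
      (hf.summable hq))
    · positivity
    · exact Real.rpow_le_rpow (norm_nonneg _) (norm_indicator_le_norm_self f i) hq.le

/-- The restriction `x ↦ x_{|E}` of elements of `X_{p,w}` to a set `E` of coordinates. -/
def restrict (E : Set ℕ) (x : Xpw p w) : Xpw p w :=
  show ↥(XpwMod p w) from
  ⟨(⟨E.indicator ((Xpw.pair x).1 : ℕ → ℝ), memℓp_indicator E (lp.memℓp (Xpw.pair x).1)⟩,
    ⟨E.indicator ((Xpw.pair x).2 : ℕ → ℝ), memℓp_indicator E (lp.memℓp (Xpw.pair x).2)⟩), by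
    intro n
    by_cases hn : n ∈ E
    · have h : ((Xpw.pair x).2 : ℕ → ℝ) n = w n * ((Xpw.pair x).1 : ℕ → ℝ) n :=
        (show ↥(XpwMod p w) from x).2 n
      simpa [Set.indicator_of_mem hn] using h
    · simp [Set.indicator_of_notMem hn]⟩

section helpers

/-- restriction of an `lp` element to a set of coordinates -/
def indL {q : ℝ≥0∞} (E : Set ℕ) (x : lp (fun _ : ℕ => ℝ) q) : lp (fun _ : ℕ => ℝ) q :=
  ⟨E.indicator (x : ℕ → ℝ), memℓp_indicator E (lp.memℓp x)⟩

theorem indL_apply {q : ℝ≥0∞} (E : Set ℕ) (x : lp (fun _ : ℕ => ℝ) q) (n : ℕ) :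
    (indL E x : ℕ → ℝ) n = E.indicator (x : ℕ → ℝ) n := rfl

theorem indL_add {q : ℝ≥0∞} (E : Set ℕ) (x y : lp (fun _ : ℕ => ℝ) q) :
    indL E (x + y) = indL E x + indL E y := by
  ext n
  simp only [indL_apply, lp.coeFn_add, Pi.add_apply]
  by_cases h : n ∈ E <;> simp [h]

theorem indL_sub {q : ℝ≥0∞} (E : Set ℕ) (x y : lp (fun _ : ℕ => ℝ) q) :
    indL E (x - y) = indL E x - indL E y := by
  ext n
  simp only [indL_apply, lp.coeFn_sub, Pi.sub_apply]
  by_cases h : n ∈ E <;> simp [h]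

theorem indL_norm_rpow {q : ℝ≥0∞} (hq : 0 < q.toReal) (E : Set ℕ)
    (x : lp (fun _ : ℕ => ℝ) q) :
    ‖indL E x‖ ^ q.toReal = ∑' n, E.indicator (fun n => |(x : ℕ → ℝ) n| ^ q.toReal) n := by
  rw [lp.norm_rpow_eq_tsum hq]
  congr 1
  ext n
  rw [indL_apply]
  by_cases h : n ∈ E
  · simp [h]
  · simp [h, hq.ne']

theorem abs_summable {q : ℝ≥0∞} (hq : 0 < q.toReal) (x : lp (fun _ : ℕ => ℝ) q) :
    Summable (fun n => |(x : ℕ → ℝ) n| ^ q.toReal) := by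
  simpa using (lp.memℓp x).summable hq

theorem indL_split {q : ℝ≥0∞} (hq : 0 < q.toReal) (E : Set ℕ) (x : lp (fun _ : ℕ => ℝ) q) :
    ‖x‖ ^ q.toReal = ‖indL E x‖ ^ q.toReal + ‖indL Eᶜ x‖ ^ q.toReal := by
  rw [indL_norm_rpow hq, indL_norm_rpow hq, lp.norm_rpow_eq_tsum hq,
    ← Summable.tsum_add ((abs_summable hq x).indicator _) ((abs_summable hq x).indicator _)]
  congr 1
  ext n
  by_cases h : n ∈ E <;> simp [h]

theorem indL_mono {q : ℝ≥0∞} (hq : 0 < q.toReal) {E F : Set ℕ} (h : E ⊆ F)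
    (x : lp (fun _ : ℕ => ℝ) q) : ‖indL E x‖ ≤ ‖indL F x‖ := by
  rw [← Real.rpow_le_rpow_iff (lp.norm_nonneg' _) (lp.norm_nonneg' _) hq,
    indL_norm_rpow hq, indL_norm_rpow hq]
  refine Summable.tsum_le_tsum (fun n => ?_) ((abs_summable hq x).indicator _)
    ((abs_summable hq x).indicator _)
  exact Set.indicator_le_indicator_of_subset h (fun _ => by positivity) n

theorem indL_le {q : ℝ≥0∞} (hq : 0 < q.toReal) (E : Set ℕ)
    (x : lp (fun _ : ℕ => ℝ) q) : ‖indL E x‖ ≤ ‖x‖ := by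
  have := indL_mono hq (Set.subset_univ E) x
  have h : indL Set.univ x = x := by ext n; simp [indL_apply]
  rwa [h] at this

theorem indL_finset {q : ℝ≥0∞} (hq : 0 < q.toReal) (E : Finset ℕ)
    (x : lp (fun _ : ℕ => ℝ) q) :
    ‖indL (E : Set ℕ) x‖ ^ q.toReal = ∑ n ∈ E, |(x : ℕ → ℝ) n| ^ q.toReal := by
  rw [indL_norm_rpow hq, tsum_eq_sum (s := E)]
  · exact Finset.sum_congr rfl (fun n hn => by simp [hn])
  · intro n hn; simp [hn]

theorem indL_tail {q : ℝ≥0∞} (hq : 0 < q.toReal) (x : lp (fun _ : ℕ => ℝ) q) {t : ℝ}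
    (ht : 0 < t) : ∃ n : ℕ, ‖indL ((Finset.range n : Finset ℕ) : Set ℕ)ᶜ x‖ < t := by
  have h1 : Filter.Tendsto (fun n : ℕ => ∑ i ∈ Finset.range n, |(x : ℕ → ℝ) i| ^ q.toReal)
      Filter.atTop (nhds (‖x‖ ^ q.toReal)) := by
    rw [lp.norm_rpow_eq_tsum hq]
    simpa using (abs_summable hq x).hasSum.tendsto_sum_nat
  have h2 : ‖x‖ ^ q.toReal - t ^ q.toReal < ‖x‖ ^ q.toReal := by
    have : 0 < t ^ q.toReal := by positivity
    linarith
  obtain ⟨n, hn⟩ := (h1.eventually (lt_mem_nhds h2)).exists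
  refine ⟨n, ?_⟩
  rw [← Real.rpow_lt_rpow_iff (lp.norm_nonneg' _) ht.le hq]
  have := indL_split hq ((Finset.range n : Finset ℕ) : Set ℕ) x
  rw [indL_finset hq] at this
  linarith

theorem add_bound {q : ℝ≥0∞} [Fact (1 ≤ q)] (hq : 0 < q.toReal) (u : lp (fun _ : ℕ => ℝ) q)
    (z : ℕ → lp (fun _ : ℕ => ℝ) q) (M : ℝ) (hM : 0 ≤ M) (hzM : ∀ k, ‖z k‖ ≤ M)
    (hz : ∀ n, Filter.Tendsto (fun k => (z k : ℕ → ℝ) n) Filter.atTop (nhds 0)) :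
    ∀ᶠ k in Filter.atTop, ‖u + z k‖ ^ q.toReal ≤ ‖u‖ ^ q.toReal + M ^ q.toReal + 1 := by
  have c1 : ∀ A : ℝ, Filter.Tendsto (fun s : ℝ => (A + s) ^ q.toReal)
      (nhds 0) (nhds (A ^ q.toReal)) := by
    intro A
    have : Continuous (fun s : ℝ => (A + s) ^ q.toReal) :=
      (continuous_const.add continuous_id).rpow_const (fun _ => Or.inr hq.le)
    simpa using this.tendsto 0
  have e1 := (c1 M).eventually (gt_mem_nhds (show M ^ q.toReal < M ^ q.toReal + 1 / 2 by linarith))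
  obtain ⟨t, ht, htb⟩ := Metric.eventually_nhds_iff.mp e1
  obtain ⟨n, hn⟩ := indL_tail hq u ht
  have hhead : Filter.Tendsto
      (fun k => ‖indL ((Finset.range n : Finset ℕ) : Set ℕ) (z k)‖) Filter.atTop (nhds 0) := by
    have h : Filter.Tendsto (fun k => ∑ i ∈ Finset.range n, |(z k : ℕ → ℝ) i| ^ q.toReal)
        Filter.atTop (nhds (∑ i ∈ Finset.range n, (0:ℝ))) := by
      refine tendsto_finsetSum _ (fun i _ => ?_)
      have := ((hz i).abs).rpow_const (p := q.toReal) (Or.inr hq.le)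
      simpa [hq.ne'] using this
    have h' := h.rpow_const (p := 1 / q.toReal) (Or.inr (by positivity))
    have h0 : (0:ℝ) ^ (1 / q.toReal) = 0 := Real.zero_rpow (by positivity)
    simp only [Finset.sum_const_zero, h0] at h'
    refine h'.congr (fun k => ?_)
    rw [← indL_finset hq, ← Real.rpow_mul (lp.norm_nonneg' _), mul_one_div_cancel hq.ne',
      Real.rpow_one]
  have e2 := hhead.eventually ((c1 ‖u‖).eventually
    (gt_mem_nhds (show ‖u‖ ^ q.toReal < ‖u‖ ^ q.toReal + 1 / 2 by linarith)))
  filter_upwards [e2] with k hk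
  rw [indL_split hq ((Finset.range n : Finset ℕ) : Set ℕ), indL_add, indL_add]
  have b1 : ‖indL ((Finset.range n : Finset ℕ) : Set ℕ) u +
      indL ((Finset.range n : Finset ℕ) : Set ℕ) (z k)‖ ^ q.toReal ≤ ‖u‖ ^ q.toReal + 1 / 2 := by
    refine le_trans (Real.rpow_le_rpow (norm_nonneg _) ?_ hq.le) hk.le
    exact (norm_add_le _ _).trans (add_le_add (indL_le hq _ _) le_rfl)
  have b2 : ‖indL ((Finset.range n : Finset ℕ) : Set ℕ)ᶜ u +
      indL ((Finset.range n : Finset ℕ) : Set ℕ)ᶜ (z k)‖ ^ q.toReal ≤ M ^ q.toReal + 1 / 2 := by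
    have := htb (y := ‖indL ((Finset.range n : Finset ℕ) : Set ℕ)ᶜ u‖)
      (by simpa [Real.dist_eq] using hn)
    refine le_trans (Real.rpow_le_rpow (norm_nonneg _) ?_ hq.le) this.le
    refine (norm_add_le _ _).trans ?_
    have := (indL_le hq ((Finset.range n : Finset ℕ) : Set ℕ)ᶜ (z k)).trans (hzM k)
    linarith
  linarith

theorem exists_finset_between (f : ℕ → ℝ) (a : ℝ) (ha : 0 < a) (F : Finset ℕ)
    (hfa : ∀ n ∈ F, f n ≤ a) (h : a ≤ ∑ n ∈ F, f n) :
    ∃ E ⊆ F, a ≤ ∑ n ∈ E, f n ∧ ∑ n ∈ E, f n ≤ 2 * a := by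
  induction F using Finset.induction_on with
  | empty => simp at h; linarith
  | insert b F hb ih =>
    by_cases h1 : a ≤ ∑ n ∈ F, f n
    · obtain ⟨E, hE, h2⟩ := ih (fun n hn => hfa n (by simp [hn])) h1
      exact ⟨E, hE.trans (Finset.subset_insert _ _), h2⟩
    · refine ⟨_, subset_rfl, h, ?_⟩
      rw [Finset.sum_insert hb]
      have := hfa b (by simp)
      push Not at h1
      linarith

theorem exists_block (p : ℝ) (hp : 2 < p) (w : ℕ → ℝ) (hw : IsXpWeight p w) (a : ℝ)
    (ha : 0 < a) (N : ℕ) : ∃ E : Finset ℕ, (∀ n ∈ E, N ≤ n) ∧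
      a ≤ ∑ n ∈ E, w n ^ (2 * p / (p - 2)) ∧ ∑ n ∈ E, w n ^ (2 * p / (p - 2)) ≤ 2 * a := by
  have hs : 0 < 2 * p / (p - 2) := div_pos (by linarith) (by linarith)
  set s := 2 * p / (p - 2) with hsdef
  set η := a ^ (1 / s) with hη
  have hη0 : 0 < η := by positivity
  have hsmall : ∀ n, w n < η → w n ^ s ≤ a := by
    intro n hn
    have := Real.rpow_le_rpow (hw.1 n).le hn.le hs.le
    rwa [hη, ← Real.rpow_mul ha.le, one_div_mul_cancel hs.ne', Real.rpow_one] at this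
  have key : ∃ F : Finset ℕ, (∀ n ∈ F, N ≤ n ∧ w n < η) ∧ a ≤ ∑ n ∈ F, w n ^ s := by
    by_contra hcon
    push Not at hcon
    have htop := hw.2 η hη0
    rw [← hsdef] at htop
    have : (∑' n : {n : ℕ | w n < η}, ENNReal.ofReal (w (n : ℕ) ^ s)) ≤
        ENNReal.ofReal (∑ n ∈ Finset.range N, w n ^ s + a) := by
      rw [ENNReal.tsum_eq_iSup_sum]
      refine iSup_le (fun F => ?_)
      rw [← ENNReal.ofReal_sum_of_nonneg (fun n _ => Real.rpow_nonneg (hw.1 _).le _)]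
      refine ENNReal.ofReal_le_ofReal ?_
      have e : ∑ n ∈ F, w (n : ℕ) ^ s =
          ∑ n ∈ F.map (Function.Embedding.subtype _), w n ^ s := by
        rw [Finset.sum_map]; rfl
      rw [e]
      set G := F.map (Function.Embedding.subtype _) with hG
      rw [← Finset.sum_filter_add_sum_filter_not G (fun n => n < N)]
      refine add_le_add ?_ (hcon _ ?_).le
      · refine Finset.sum_le_sum_of_subset_of_nonneg ?_
          (fun n _ _ => Real.rpow_nonneg (hw.1 _).le _)
        intro n hn
        simp at hn ⊢
        exact hn.2
      · intro n hn
        rw [Finset.mem_filter, hG, Finset.mem_map] at hn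
        obtain ⟨⟨m, _, rfl⟩, h2⟩ := hn
        exact ⟨by omega, m.2⟩
    rw [htop] at this
    exact absurd (top_le_iff.mp this) ENNReal.ofReal_ne_top
  obtain ⟨F, hF, hFa⟩ := key
  obtain ⟨E, hE, h1, h2⟩ := exists_finset_between (fun n => w n ^ s) a ha F
    (fun n hn => hsmall n (hF n hn).2) hFa
  exact ⟨E, fun n hn => (hF n (hE hn)).1, h1, h2⟩

theorem memFin {q : ℝ≥0∞} (E : Finset ℕ) (f : ℕ → ℝ) :
    Memℓp ((E : Set ℕ).indicator f) q := by
  refine (memℓp_zero (?_ : Set.Finite _)).of_exponent_ge (zero_le)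
  refine E.finite_toSet.subset ?_
  intro n hn
  by_contra h
  exact hn (Set.indicator_of_notMem h _)

/-- finitely supported element of `Xpw` -/
def mkFin (E : Finset ℕ) (f : ℕ → ℝ) : Xpw p w :=
  show ↥(XpwMod p w) from
  ⟨(⟨(E : Set ℕ).indicator f, memFin E f⟩,
    ⟨(E : Set ℕ).indicator (fun n => w n * f n), memFin E _⟩), by
      intro n
      by_cases h : n ∈ (E : Set ℕ)
      · simp [h]
      · simp [h]⟩

theorem pair_add [Fact (1 ≤ ENNReal.ofReal p)] (x y : Xpw p w) :
    Xpw.pair (x + y) = Xpw.pair x + Xpw.pair y := rfl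

theorem pair_sub [Fact (1 ≤ ENNReal.ofReal p)] (x y : Xpw p w) :
    Xpw.pair (x - y) = Xpw.pair x - Xpw.pair y := rfl

theorem pair_neg [Fact (1 ≤ ENNReal.ofReal p)] (x : Xpw p w) :
    Xpw.pair (-x) = - Xpw.pair x := rfl

theorem norm_pair [Fact (1 ≤ ENNReal.ofReal p)] (x : Xpw p w) :
    ‖x‖ = max ‖(Xpw.pair x).1‖ ‖(Xpw.pair x).2‖ := rfl

theorem pair_rel (x : Xpw p w) (n : ℕ) :
    ((Xpw.pair x).2 : ℕ → ℝ) n = w n * ((Xpw.pair x).1 : ℕ → ℝ) n :=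
  (show ↥(XpwMod p w) from x).2 n

theorem norm_finsupp {q : ℝ≥0∞} (hq : 0 < q.toReal) (E : Finset ℕ)
    (x : lp (fun _ : ℕ => ℝ) q) (hx : ∀ n ∉ E, (x : ℕ → ℝ) n = 0) :
    ‖x‖ ^ q.toReal = ∑ n ∈ E, |(x : ℕ → ℝ) n| ^ q.toReal := by
  rw [← indL_finset hq]
  congr 2
  ext n
  rw [indL_apply]
  by_cases h : n ∈ E
  · simp [h]
  · simp [h, hx n h]

end helpers

section key

theorem norm_sq_finset (E : Finset ℕ) (x : Seq2) :
    ‖indL (E : Set ℕ) x‖ ^ 2 = ∑ n ∈ E, (x : ℕ → ℝ) n ^ 2 := by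
  have := indL_finset (q := 2) (by norm_num) E x
  simpa using this

theorem key_block (p : ℝ) (hp : 2 < p) [Fact (1 ≤ ENNReal.ofReal p)]
    (w : ℕ → ℝ) (hw : IsXpWeight p w) (Y : Submodule ℝ (Xpw p w)) (ε α : ℝ)
    (hε0 : 0 < ε) (hε1 : ε < 1) (hα : 0 < α)
    (hY : ∀ x : Xpw p w, x ≠ 0 → ratio x < α → ∃ y ∈ Y, ‖x - y‖ < ε * ‖x‖) :
    ∃ κ : ℝ, 0 < κ ∧ ∀ N : ℕ, ∃ y ∈ Y, ∃ E : Finset ℕ, (∀ n ∈ E, N ≤ n) ∧ ‖y‖ ≤ 2 ∧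
      κ ≤ ‖indL (E : Set ℕ) (Xpw.pair y).2‖ := by
  have hp0 : 0 < p := by linarith
  have hpt : (ENNReal.ofReal p).toReal = p := ENNReal.toReal_ofReal hp0.le
  have hpq : 0 < (ENNReal.ofReal p).toReal := by rw [hpt]; exact hp0
  have hp2 : p - 2 ≠ 0 := by linarith
  set β : ℝ := 1 / 2 - 1 / p with hβdef
  have hβ : 0 < β := by
    have : 1 / p < 1 / 2 := one_div_lt_one_div_of_lt (by norm_num) hp
    linarith
  set b : ℝ := min 1 ((α / 2) ^ (1 / β)) with hb
  have hb0 : 0 < b := by positivity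
  have hb1 : b ≤ 1 := min_le_left _ _
  have hbα : b ^ β ≤ α / 2 := by
    have := Real.rpow_le_rpow hb0.le (min_le_right 1 ((α / 2) ^ (1 / β))) hβ.le
    rwa [← Real.rpow_mul (by positivity), one_div_mul_cancel hβ.ne', Real.rpow_one] at this
  refine ⟨(1 - ε) * √(b / 2), mul_pos (by linarith) (by positivity), fun N => ?_⟩
  obtain ⟨E, hEN, hE1, hE2⟩ := exists_block p hp w hw (b / 2) (by positivity) N
  set ω := ∑ n ∈ E, w n ^ (2 * p / (p - 2)) with hω
  have hω0 : 0 < ω := by linarith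
  have hωb : ω ≤ b := by linarith
  set t : ℝ := 2 / (p - 2) with ht
  set g : Xpw p w := mkFin E (fun n => w n ^ t) with hg
  have g1 : ∀ n, ((Xpw.pair g).1 : ℕ → ℝ) n = (E : Set ℕ).indicator (fun n => w n ^ t) n :=
    fun n => rfl
  have g2 : ∀ n, ((Xpw.pair g).2 : ℕ → ℝ) n =
      (E : Set ℕ).indicator (fun n => w n * w n ^ t) n := fun n => rfl
  have n1 : ‖(Xpw.pair g).1‖ ^ p = ω := by
    have := norm_finsupp hpq E (Xpw.pair g).1 (fun n hn => by rw [g1]; simp [hn])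
    rw [hpt] at this
    rw [this, hω]
    refine Finset.sum_congr rfl (fun n hn => ?_)
    rw [g1, Set.indicator_of_mem (by simpa using hn), abs_of_nonneg (Real.rpow_nonneg (hw.1 n).le _),
      ← Real.rpow_mul (hw.1 n).le]
    congr 1; rw [ht]; field_simp
  have n2 : ‖(Xpw.pair g).2‖ ^ 2 = ω := by
    have := norm_finsupp (q := 2) (by norm_num) E (Xpw.pair g).2
      (fun n hn => by rw [g2]; simp [hn])
    simp only [ENNReal.toReal_ofNat, Real.rpow_ofNat, sq_abs] at this
    rw [this, hω]
    refine Finset.sum_congr rfl (fun n hn => ?_)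
    rw [g2, Set.indicator_of_mem (by simpa using hn)]
    have : w n * w n ^ t = w n ^ (t + 1) := by
      rw [Real.rpow_add_one (hw.1 n).ne', mul_comm]
    rw [this, ← Real.rpow_natCast, ← Real.rpow_mul (hw.1 n).le]
    congr 1; rw [ht]; push_cast; field_simp; ring
  have m1 : ‖(Xpw.pair g).1‖ = ω ^ (1 / p) := by
    rw [← n1, ← Real.rpow_mul (norm_nonneg _), mul_one_div_cancel hp0.ne', Real.rpow_one]
  have m2 : ‖(Xpw.pair g).2‖ = ω ^ (1 / 2 : ℝ) := by
    rw [← n2, ← Real.sqrt_eq_rpow, Real.sqrt_sq (norm_nonneg _)]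
  have hpos : 0 < ω ^ (1 / p) := by positivity
  have hgn : ‖g‖ = ω ^ (1 / p) := by
    rw [norm_pair, m1, m2]
    refine max_eq_left (Real.rpow_le_rpow_of_exponent_ge hω0 (by linarith) ?_)
    linarith
  have hgne : g ≠ 0 := by
    intro h; rw [h, norm_zero] at hgn; linarith
  have hr : ratio g < α := by
    have : ratio g = ω ^ β := by
      unfold ratio nrm2 nrmP
      rw [m1, m2, ← Real.rpow_sub hω0]
    rw [this]
    have := Real.rpow_le_rpow hω0.le hωb hβ.le
    linarith
  obtain ⟨y, hyY, hy⟩ := hY g hgne hr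
  refine ⟨y, hyY, E, hEN, ?_, ?_⟩
  · have h1 : ‖y‖ ≤ ‖g‖ + ‖g - y‖ := by
      have := norm_sub_le g (g - y)
      simpa using this
    have h2 : ‖g‖ ≤ 1 := by
      rw [hgn]; exact Real.rpow_le_one hω0.le (by linarith) (by positivity)
    nlinarith [norm_nonneg g]
  · have hd : ‖(Xpw.pair (g - y)).1‖ ≤ ε * ω ^ (1 / p) := by
      rw [← hgn]
      exact (le_max_left _ _).trans ((norm_pair (g - y)).symm.le.trans hy.le)
    set h : ℕ → ℝ := ((Xpw.pair (g - y)).1 : ℕ → ℝ) with hh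
    set v : ℕ → ℝ := ((Xpw.pair y).1 : ℕ → ℝ) with hv
    have hhv : ∀ n ∈ E, h n = w n ^ t - v n := by
      intro n hn
      have : h n = ((Xpw.pair g).1 : ℕ → ℝ) n - v n := by
        rw [hh, pair_sub]; simp [hv]
      rw [this, g1, Set.indicator_of_mem (by simpa using hn)]
    have hpq' : p.HolderConjugate (p / (p - 1)) := Real.HolderConjugate.conjExponent (by linarith)
    have holder := Real.inner_le_Lp_mul_Lq E h (fun n => w n ^ (t + 2)) hpq'
    have s1 : ∑ n ∈ E, |w n ^ (t + 2)| ^ (p / (p - 1)) = ω := by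
      rw [hω]
      refine Finset.sum_congr rfl (fun n hn => ?_)
      rw [abs_of_nonneg (Real.rpow_nonneg (hw.1 n).le _), ← Real.rpow_mul (hw.1 n).le]
      have : p - 1 ≠ 0 := by linarith
      congr 1; rw [ht]; field_simp; ring
    have s2 : (∑ n ∈ E, |h n| ^ p) ^ (1 / p) ≤ ε * ω ^ (1 / p) := by
      have e := indL_finset hpq E (Xpw.pair (g - y)).1
      rw [hpt] at e
      rw [← hh] at e
      rw [← e, ← Real.rpow_mul (norm_nonneg _), mul_one_div_cancel hp0.ne', Real.rpow_one]
      exact (indL_le hpq _ _).trans hd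
    rw [s1] at holder
    have s3 : ∑ n ∈ E, h n * w n ^ (t + 2) ≤ ε * ω := by
      refine holder.trans ((mul_le_mul_of_nonneg_right s2 (by positivity)).trans_eq ?_)
      rw [mul_assoc, ← Real.rpow_add hω0]
      have : 1 / p + 1 / (p / (p - 1)) = 1 := by
        field_simp; ring
      rw [this, Real.rpow_one]
    have s4 : ∑ n ∈ E, h n * w n ^ (t + 2) =
        ω - ∑ n ∈ E, w n ^ (t + 1) * (w n * v n) := by
      rw [hω, ← Finset.sum_sub_distrib]
      refine Finset.sum_congr rfl (fun n hn => ?_)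
      rw [hhv n hn, sub_mul, ← Real.rpow_add (hw.1 n)]
      congr 1
      · congr 1; rw [ht]; field_simp; ring
      · have : t + 2 = (t + 1) + 1 := by ring
        rw [this, Real.rpow_add_one (hw.1 n).ne' (t + 1)]
        ring
    have cs := Finset.sum_mul_sq_le_sq_mul_sq E (fun n => w n ^ (t + 1)) (fun n => w n * v n)
    have s5 : ∑ n ∈ E, (w n ^ (t + 1)) ^ 2 = ω := by
      rw [hω]
      refine Finset.sum_congr rfl (fun n hn => ?_)
      rw [← Real.rpow_natCast, ← Real.rpow_mul (hw.1 n).le]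
      congr 1; rw [ht]; push_cast; field_simp; ring
    have s6 : ‖indL (E : Set ℕ) (Xpw.pair y).2‖ ^ 2 = ∑ n ∈ E, (w n * v n) ^ 2 := by
      rw [norm_sq_finset]
      exact Finset.sum_congr rfl (fun n hn => by rw [pair_rel])
    rw [s5, ← s6] at cs
    set S := ∑ n ∈ E, w n ^ (t + 1) * (w n * v n) with hS
    have s7 : (1 - ε) * ω ≤ S := by linarith
    have s8 : ((1 - ε) * ω) ^ 2 ≤ ω * ‖indL (E : Set ℕ) (Xpw.pair y).2‖ ^ 2 :=
      (pow_le_pow_left₀ (mul_nonneg (by linarith) hω0.le) s7 2).trans cs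
    have s9 : (1 - ε) ^ 2 * ω ≤ ‖indL (E : Set ℕ) (Xpw.pair y).2‖ ^ 2 := by
      refine le_of_mul_le_mul_left ?_ hω0
      calc _ = ((1 - ε) * ω) ^ 2 := by ring
        _ ≤ _ := s8
    refine le_of_sq_le_sq ?_ (norm_nonneg _)
    rw [mul_pow, Real.sq_sqrt (by positivity)]
    refine le_trans ?_ s9
    exact mul_le_mul_of_nonneg_left hE1 (by positivity)

/-- Existence of a bounded coordinatewise null sequence in `Y`, bounded below in `|·|_2`. -/
theorem key_null (p : ℝ) (hp : 2 < p) [Fact (1 ≤ ENNReal.ofReal p)]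
    (w : ℕ → ℝ) (Y : Submodule ℝ (Xpw p w)) (κ : ℝ) (hκ : 0 < κ)
    (hY : ∀ N : ℕ, ∃ y ∈ Y, ∃ E : Finset ℕ, (∀ n ∈ E, N ≤ n) ∧ ‖y‖ ≤ 2 ∧
      κ ≤ ‖indL (E : Set ℕ) (Xpw.pair y).2‖) :
    ∃ d : ℕ → Xpw p w, (∀ m, d m ∈ Y) ∧ (∀ m, ‖(Xpw.pair (d m)).1‖ ≤ 4) ∧
      (∀ m, κ / 2 ≤ ‖(Xpw.pair (d m)).2‖) ∧
      ∀ n, Filter.Tendsto (fun m => ((Xpw.pair (d m)).1 : ℕ → ℝ) n) Filter.atTop (nhds 0) := by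
  have hp0 : 0 < p := by linarith
  have hne : ENNReal.ofReal p ≠ 0 := by simpa using hp0
  have h2 : 0 < (2 : ℝ≥0∞).toReal := by norm_num
  choose y hyY E hE hy2 hyE using hY
  have hy1 : ∀ k, ‖(Xpw.pair (y k)).1‖ ≤ 2 := fun k =>
    (le_max_left _ _).trans ((norm_pair (y k)).symm.le.trans (hy2 k))
  have hcomp : IsCompact (Set.pi Set.univ (fun _ : ℕ => Set.Icc (-2 : ℝ) 2)) :=
    isCompact_univ_pi (fun _ => isCompact_Icc)
  obtain ⟨l, -, φ, hφ, hl⟩ := hcomp.tendsto_subseq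
    (x := fun k => ((Xpw.pair (y k)).1 : ℕ → ℝ)) (by
      intro k n _
      have := (lp.norm_apply_le_norm hne (Xpw.pair (y k)).1 n).trans (hy1 k)
      rw [Real.norm_eq_abs] at this
      exact abs_le.mp this)
  have hi : ∀ m, ∃ i, m ≤ i ∧
      ‖indL (E (φ i) : Set ℕ) (Xpw.pair (y (φ m))).2‖ < κ / 2 := by
    intro m
    obtain ⟨n, hn⟩ := indL_tail h2 (Xpw.pair (y (φ m))).2 (half_pos hκ)
    refine ⟨max m n, le_max_left _ _, lt_of_le_of_lt (indL_mono h2 ?_ _) hn⟩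
    intro j hj
    have h3 := hE (φ (max m n)) j hj
    have h4 := hφ.id_le (max m n)
    simp only [id] at h4
    have : n ≤ j := (le_max_right m n).trans (h4.trans h3)
    simpa using this
  choose i him hi using hi
  refine ⟨fun m => y (φ (i m)) - y (φ m), fun m => Y.sub_mem (hyY _) (hyY _), fun m => ?_,
    fun m => ?_, fun n => ?_⟩
  · rw [pair_sub]
    have := norm_sub_le (Xpw.pair (y (φ (i m)))).1 (Xpw.pair (y (φ m))).1
    have h3 := hy1 (φ (i m))
    have h4 := hy1 (φ m)
    exact this.trans (by linarith)
  · refine le_trans ?_ (indL_le h2 (E (φ (i m)) : Set ℕ) _)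
    rw [pair_sub, Prod.snd_sub, indL_sub]
    have := norm_sub_norm_le (indL (E (φ (i m)) : Set ℕ) (Xpw.pair (y (φ (i m)))).2)
      (indL (E (φ (i m)) : Set ℕ) (Xpw.pair (y (φ m))).2)
    have h3 := hyE (φ (i m))
    have h4 := hi m
    linarith
  · have hn := (tendsto_pi_nhds.mp hl) n
    have hii : Filter.Tendsto i Filter.atTop Filter.atTop :=
      Filter.tendsto_atTop_mono him Filter.tendsto_id
    have := (hn.comp hii).sub hn
    rw [sub_self] at this
    refine this.congr (fun m => ?_)
    rw [pair_sub]
    simp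

theorem key_step (p : ℝ) (hp : 2 < p) [Fact (1 ≤ ENNReal.ofReal p)]
    (w : ℕ → ℝ) (Y : Submodule ℝ (Xpw p w)) (c : ℝ) (hc : 0 < c)
    (d : ℕ → Xpw p w) (hdY : ∀ m, d m ∈ Y) (hd1 : ∀ m, ‖(Xpw.pair (d m)).1‖ ≤ 4)
    (hd2 : ∀ m, c ≤ ‖(Xpw.pair (d m)).2‖)
    (hd : ∀ n, Filter.Tendsto (fun m => ((Xpw.pair (d m)).1 : ℕ → ℝ) n) Filter.atTop (nhds 0))
    (N : ℕ) : ∃ u ∈ Y, ‖(Xpw.pair u).1‖ ^ p ≤ N * ((4 : ℝ) ^ p + 1) ∧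
      N * c ^ 2 ≤ ‖(Xpw.pair u).2‖ ^ 2 := by
  have hp0 : 0 < p := by linarith
  have hpt : (ENNReal.ofReal p).toReal = p := ENNReal.toReal_ofReal hp0.le
  have hpq : 0 < (ENNReal.ofReal p).toReal := by rw [hpt]; exact hp0
  induction N with
  | zero =>
    refine ⟨0, Y.zero_mem, ?_, ?_⟩
    · have : (Xpw.pair (0 : Xpw p w)).1 = 0 := rfl
      rw [this, norm_zero, Real.zero_rpow hp0.ne']; simp
    · simp
  | succ N ih =>
    obtain ⟨u, huY, hu1, hu2⟩ := ih
    have e1 := add_bound hpq (Xpw.pair u).1 (fun m => (Xpw.pair (d m)).1) 4 (by norm_num) hd1 hd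
    have e2 := add_bound hpq (Xpw.pair u).1 (fun m => -(Xpw.pair (d m)).1) 4 (by norm_num)
      (fun m => by rw [norm_neg]; exact hd1 m)
      (fun n => by simpa using (hd n).neg)
    obtain ⟨m, hm1, hm2⟩ := (e1.and e2).exists
    rw [hpt] at hm1 hm2
    have hcd : c ^ 2 ≤ ‖(Xpw.pair (d m)).2‖ ^ 2 := pow_le_pow_left₀ hc.le (hd2 m) 2
    push_cast
    rcases le_total 0 (inner ℝ (Xpw.pair u).2 (Xpw.pair (d m)).2) with h | h
    · refine ⟨u + d m, Y.add_mem huY (hdY m), ?_, ?_⟩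
      · rw [pair_add]
        refine hm1.trans ?_
        linarith
      · rw [pair_add, Prod.snd_add, norm_add_sq_real]
        linarith
    · refine ⟨u + -d m, Y.add_mem huY (Y.neg_mem (hdY m)), ?_, ?_⟩
      · rw [pair_add]
        refine hm2.trans ?_
        linarith
      · rw [pair_add, Prod.snd_add, pair_neg, Prod.snd_neg, norm_add_sq_real, inner_neg_right,
          norm_neg]
        linarith

end key

/-- Proposition 2.8: there do not exist a closed infinite dimensional
subspace `Y` of `X_p` and constants `0 < ε < 1`, `α > 0` such that (a) `r(Y) < ∞` and
(b) every nonzero `x ∈ X_p` with `r(x) < α` admits `y ∈ Y` with `‖x - y‖ < ε ‖x‖`. -/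
theorem stmt18 (p : ℝ) (hp : 2 < p) [Fact (1 ≤ ENNReal.ofReal p)]
    (w : ℕ → ℝ) (hw : IsXpWeight p w) :
    ¬ ∃ (Y : Submodule ℝ (Xpw p w)) (ε α : ℝ),
        IsClosed (Y : Set (Xpw p w)) ∧ ¬ FiniteDimensional ℝ ↥Y ∧
        0 < ε ∧ ε < 1 ∧ 0 < α ∧
        (∃ C : ℝ, ∀ y ∈ Y, y ≠ 0 → ratio y ≤ C) ∧
        (∀ x : Xpw p w, x ≠ 0 → ratio x < α → ∃ y ∈ Y, ‖x - y‖ < ε * ‖x‖) := by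
  rintro ⟨Y, ε, α, -, -, hε0, hε1, hα, ⟨C, hC⟩, hY⟩
  obtain ⟨κ, hκ, hκY⟩ := key_block p hp w hw Y ε α hε0 hε1 hα hY
  obtain ⟨d, hdY, hd1, hd2, hd⟩ := key_null p hp w Y κ hκ hκY
  have hc : 0 < κ / 2 := half_pos hκ
  set c := κ / 2
  have hp0 : 0 < p := by linarith
  set K : ℝ := (4 : ℝ) ^ p + 1 with hK
  have hK0 : 0 < K := by positivity
  have main : ∀ N : ℕ, 1 ≤ N → (N : ℝ) ^ (1 - 2 / p) ≤ C ^ 2 * K ^ (2 / p) / c ^ 2 := by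
    intro N hN
    have hN0 : (0 : ℝ) < N := by exact_mod_cast hN
    obtain ⟨u, huY, hu1, hu2⟩ := key_step p hp w Y c hc d hdY hd1 hd2 hd N
    have h2pos : 0 < ‖(Xpw.pair u).2‖ ^ 2 := lt_of_lt_of_le (by positivity) hu2
    have hune : u ≠ 0 := by
      rintro rfl
      have : (Xpw.pair (0 : Xpw p w)).2 = 0 := rfl
      rw [this] at h2pos
      simp at h2pos
    have h1pos : 0 < ‖(Xpw.pair u).1‖ := by
      rw [norm_pos_iff]
      intro h
      have : (Xpw.pair u).2 = 0 := by
        ext n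
        rw [pair_rel, h]
        simp
      rw [this] at h2pos
      simp at h2pos
    have hr := hC u huY hune
    unfold ratio nrm2 nrmP at hr
    rw [div_le_iff₀ h1pos] at hr
    have h3 : ‖(Xpw.pair u).2‖ ^ 2 ≤ C ^ 2 * ‖(Xpw.pair u).1‖ ^ 2 := by
      rw [← mul_pow]
      exact pow_le_pow_left₀ (norm_nonneg _) hr 2
    have h4 : ‖(Xpw.pair u).1‖ ^ 2 ≤ (N * K) ^ (2 / p) := by
      have := Real.rpow_le_rpow (by positivity) hu1 (show 0 ≤ 2 / p by positivity)
      rwa [← Real.rpow_mul (norm_nonneg _), mul_div_cancel₀ _ hp0.ne', Real.rpow_ofNat] at this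
    rw [Real.mul_rpow hN0.le hK0.le] at h4
    have h5 : N * c ^ 2 ≤ C ^ 2 * ((N : ℝ) ^ (2 / p) * K ^ (2 / p)) :=
      hu2.trans (h3.trans (mul_le_mul_of_nonneg_left h4 (by positivity)))
    rw [Real.rpow_sub hN0, Real.rpow_one, div_le_div_iff₀ (by positivity) (by positivity)]
    linarith
  have hexp : 0 < 1 - 2 / p := by
    have : 2 / p < 1 := by rw [div_lt_one hp0]; exact hp
    linarith
  have hlim := (tendsto_rpow_atTop hexp).comp (tendsto_natCast_atTop_atTop (R := ℝ))
  obtain ⟨N, hN1, hN2⟩ := ((hlim.eventually_gt_atTop (C ^ 2 * K ^ (2 / p) / c ^ 2)).and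
    (Filter.eventually_ge_atTop 1)).exists
  exact absurd (main N hN2) (not_le.mpr hN1)
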